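/- Let m ≥ 2 be an integer and, for k = 2, …, m, set s_k = 2m/k. Then for every positive integer n and every m-linear form T : ℓ_m^n × ⋯ × ℓ_m^n → 𝕂, one has sup_{1 ≤ j_1 ≤ n} ( Σ_{j_2=1}^n ( ⋯ ( Σ_{j_m=1}^n |T(e_{j_1}, …, e_{j_m})|^{s_m} )^{s_{m−1}/s_m} ⋯ )^{s_2/s_3} )^{1/s_2} ≤ 2^{(m−1)/2} ‖T‖. -/

import Mathlib

open scoped ENNReal

/-- The iterated mixed-norm expression
`( Σ_{j_1} ( ⋯ ( Σ_{j_m} f(j_1,…,j_m)^{s_m} )^{s_{m−1}/s_m} ⋯ )^{s_1/s_2} )^{1/s_1}`,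
defined recursively: for exponents `s : Fin m → ℝ` and `f : (Fin m → Fin n) → ℝ`. -/
noncomputable def mixedNorm (n : ℕ) : (m : ℕ) → (Fin m → ℝ) → ((Fin m → Fin n) → ℝ) → ℝ
  | 0, _, f => f Fin.elim0
  | (m + 1), s, f =>
      (∑ j : Fin n,
        (mixedNorm n m (fun i => s i.succ) (fun js => f (Fin.cons j js))) ^ (s 0)) ^ (1 / s 0)

/-!
Khinchine's inequality with constant `√2`, applied in every variable, gives Littlewood's mixed
`(ℓ₁, ℓ₂)` inequality for forms on a polydisc. By duality the square of the iterated norm is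
bounded by a weighted sum `∑ |a_j|² ∏ w_l(j_l) ^ α_l` with subprobability weights `w_l`. The
arithmetic-geometric mean inequality, with the marginals `u_l` of the density of this very sum,
bounds its square root by an average of `(ℓ₁, ℓ₂)` norms of the coefficients `a_j ∏ v_l(j_l)`, where
`v_l = √(w_l ^ α_l * u_l ^ θ_l)`. The exponents are such that `v_l` lies in the unit ball of
`ℓ_{p_l}`, so these are the coefficients of a form bounded by `‖A‖` on the polydisc.
-/

open scoped BigOperators NNReal

namespace HardyLittlewood

section Signs

variable {n : ℕ}

lemma sum_pi_cons {α M : Type*} [Fintype α] [AddCommMonoid M] (f : (Fin (n + 1) → α) → M) :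
    ∑ j, f j = ∑ a, ∑ j : Fin n → α, f (Fin.cons a j) := by
  rw [← Fintype.sum_prod_type']
  exact (Fintype.sum_equiv (Fin.consEquiv fun _ => α) _ _ fun _ => rfl).symm

lemma expect_pi_cons {α M : Type*} [Fintype α] [AddCommMonoid M] [Module ℚ≥0 M]
    (f : (Fin (n + 1) → α) → M) :
    𝔼 j, f j = 𝔼 a, 𝔼 j : Fin n → α, f (Fin.cons a j) := by
  rw [← Finset.expect_product' Finset.univ Finset.univ fun a (j : Fin n → α) => f (Fin.cons a j),
    Finset.univ_product_univ]
  exact (Fintype.expect_equiv (Fin.consEquiv fun _ => α) _ _ fun _ => rfl).symm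

lemma expect_signs_succ (f : (Fin (n + 1) → ℤˣ) → ℝ) :
    𝔼 ε, f ε = 𝔼 ε : Fin n → ℤˣ, (f (Fin.cons 1 ε) + f (Fin.cons (-1) ε)) / 2 := by
  rw [expect_pi_cons, Finset.expect_comm]
  refine Finset.expect_congr rfl fun ε _ => ?_
  rw [Fintype.expect_eq_sum_div_card, UnitsInt.univ]
  simp

/-- The part `g` in the decomposition `f (a, ε) = g ε + a * h ε` with respect to the first sign. -/
noncomputable def evenPart (f : (Fin (n + 1) → ℤˣ) → ℝ) (ε : Fin n → ℤˣ) : ℝ :=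
  (f (Fin.cons 1 ε) + f (Fin.cons (-1) ε)) / 2

/-- The part `h` in the decomposition `f (a, ε) = g ε + a * h ε` with respect to the first sign. -/
noncomputable def oddPart (f : (Fin (n + 1) → ℤˣ) → ℝ) (ε : Fin n → ℤˣ) : ℝ :=
  (f (Fin.cons 1 ε) - f (Fin.cons (-1) ε)) / 2

lemma expect_eq_expect_evenPart (f : (Fin (n + 1) → ℤˣ) → ℝ) : 𝔼 ε, f ε = 𝔼 ε, evenPart f ε :=
  expect_signs_succ f

lemma expect_sq_eq_add (f : (Fin (n + 1) → ℤˣ) → ℝ) :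
    𝔼 ε, f ε ^ 2 = 𝔼 ε, evenPart f ε ^ 2 + 𝔼 ε, oddPart f ε ^ 2 := by
  rw [expect_signs_succ, ← Finset.expect_add_distrib]
  refine Finset.expect_congr rfl fun ε _ => ?_
  rw [evenPart, oddPart]
  ring

/-- The Dirichlet form `∑ i, 𝔼 |D_i f|²` of the discrete cube `{-1, 1}ⁿ`, where `D_i f` is half the
difference of `f` along the `i`-th coordinate direction. -/
noncomputable def dirichletForm (f : (Fin n → ℤˣ) → ℝ) : ℝ :=
  ∑ i, 𝔼 ε, ((f ε - f (Function.update ε i (-ε i))) / 2) ^ 2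

lemma dirichletForm_nonneg (f : (Fin n → ℤˣ) → ℝ) : 0 ≤ dirichletForm f :=
  Finset.sum_nonneg fun _ _ => Finset.expect_nonneg fun _ _ => sq_nonneg _

lemma dirichletForm_succ (f : (Fin (n + 1) → ℤˣ) → ℝ) :
    dirichletForm f
      = dirichletForm (evenPart f) + dirichletForm (oddPart f) + 𝔼 ε, oddPart f ε ^ 2 := by
  unfold dirichletForm
  rw [Fin.sum_univ_succ, add_comm, ← Finset.sum_add_distrib]
  congr 1
  · refine Finset.sum_congr rfl fun i _ => ?_
    rw [expect_signs_succ, ← Finset.expect_add_distrib]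
    refine Finset.expect_congr rfl fun ε _ => ?_
    simp only [Fin.cons_succ, ← Fin.cons_update, evenPart, oddPart]
    ring
  · rw [expect_signs_succ]
    refine Finset.expect_congr rfl fun ε _ => ?_
    simp only [Fin.cons_zero, Fin.update_cons_zero, neg_neg, oddPart]
    ring

lemma poincare_inequality : ∀ {n : ℕ} (f : (Fin n → ℤˣ) → ℝ),
    𝔼 ε, f ε ^ 2 - (𝔼 ε, f ε) ^ 2 ≤ dirichletForm f
  | 0, f => by simp [dirichletForm]
  | n + 1, f => by
    have hEven := poincare_inequality (evenPart f)
    have hOdd := dirichletForm_nonneg (oddPart f)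
    rw [dirichletForm_succ, expect_sq_eq_add, expect_eq_expect_evenPart f]
    linarith

lemma expect_zero_smul (f : (Fin (n + 1) → ℤˣ) → ℝ) :
    𝔼 ε, ε 0 • f ε = 𝔼 ε, oddPart f ε := by
  rw [expect_signs_succ]
  refine Finset.expect_congr rfl fun ε _ => ?_
  rw [oddPart, Fin.cons_zero, Fin.cons_zero, one_smul, Units.neg_smul, one_smul, sub_eq_add_neg]

lemma expect_succ_smul (f : (Fin (n + 1) → ℤˣ) → ℝ) (i : Fin n) :
    𝔼 ε, ε i.succ • f ε = 𝔼 ε, ε i • evenPart f ε := by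
  rw [expect_signs_succ]
  refine Finset.expect_congr rfl fun ε _ => ?_
  rw [evenPart, Fin.cons_succ, Fin.cons_succ, ← smul_add, smul_div_assoc]

-- The Dirichlet form multiplies each squared Fourier coefficient by its degree.
lemma poincare_inequality_two : ∀ {n : ℕ} (f : (Fin n → ℤˣ) → ℝ),
    2 * (𝔼 ε, f ε ^ 2 - (𝔼 ε, f ε) ^ 2) - ∑ i, (𝔼 ε, ε i • f ε) ^ 2 ≤ dirichletForm f
  | 0, f => by simp [dirichletForm]
  | n + 1, f => by
    have hEven := poincare_inequality_two (evenPart f)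
    have hOdd := poincare_inequality (oddPart f)
    rw [dirichletForm_succ, expect_sq_eq_add, expect_eq_expect_evenPart f, Fin.sum_univ_succ,
      expect_zero_smul]
    simp only [expect_succ_smul]
    linarith

lemma expect_update_neg {M : Type*} [AddCommMonoid M] [Module ℚ≥0 M] (f : (Fin n → ℤˣ) → M)
    (i : Fin n) :
    𝔼 ε, f (Function.update ε i (-ε i)) = 𝔼 ε, f ε :=
  have hInv : Function.Involutive fun ε : Fin n → ℤˣ => Function.update ε i (-ε i) :=
    fun ε => by simp
  Fintype.expect_equiv hInv.toPerm _ _ fun _ => rfl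

lemma dirichletForm_eq_expect (f : (Fin n → ℤˣ) → ℝ) :
    dirichletForm f = 𝔼 ε, f ε * ((∑ i, (f ε - f (Function.update ε i (-ε i)))) / 2) := by
  simp only [Finset.sum_div, Finset.mul_sum, Finset.expect_sum_comm]
  refine Finset.sum_congr rfl fun i _ => ?_
  have hSq := expect_update_neg (fun ε => f ε ^ 2 / 4) i
  rw [← sub_eq_zero, ← Finset.expect_sub_distrib] at hSq ⊢
  rw [← hSq]
  refine Finset.expect_congr rfl fun ε _ => ?_
  ring

lemma expect_smul_eq_zero {f : (Fin n → ℤˣ) → ℝ} (hf : ∀ ε, f (-ε) = f ε) (i : Fin n) :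
    𝔼 ε, ε i • f ε = 0 := by
  have hNeg : 𝔼 ε, (-ε) i • f (-ε) = 𝔼 ε, ε i • f ε :=
    Fintype.expect_equiv (Equiv.neg _) _ _ fun _ => rfl
  simp only [hf, Pi.neg_apply, Units.neg_smul, Finset.expect_neg_distrib] at hNeg
  linarith

end Signs

section Khinchine

variable {n : ℕ}

section Normed
variable {E : Type*} [NormedAddCommGroup E] [NormedSpace ℝ E]

lemma sum_update_neg_smul (x : Fin n → E) (ε : Fin n → ℤˣ) (i : Fin n) :
    ∑ k, Function.update ε i (-ε i) k • x k = ∑ k, ε k • x k - (2 : ℝ) • ε i • x i := by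
  rw [eq_sub_iff_add_eq, ← eq_sub_iff_add_eq', ← Finset.sum_sub_distrib,
    Fintype.sum_eq_single i fun k hk => by rw [Function.update_of_ne hk, sub_self],
    Function.update_self, Units.neg_smul, sub_neg_eq_add, two_smul]

lemma sum_sum_update_neg_smul (x : Fin n → E) (ε : Fin n → ℤˣ) :
    ∑ i, ∑ k, Function.update ε i (-ε i) k • x k = ((n : ℝ) - 2) • ∑ k, ε k • x k := by
  simp only [sum_update_neg_smul, Finset.sum_sub_distrib, ← Finset.smul_sum, Finset.sum_const,
    Finset.card_univ, Fintype.card_fin, sub_smul, Nat.cast_smul_eq_nsmul]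

lemma dirichletForm_norm_le (x : Fin n → E) :
    dirichletForm (fun ε => ‖∑ k, ε k • x k‖) ≤ 𝔼 ε : Fin n → ℤˣ, ‖∑ k, ε k • x k‖ ^ 2 := by
  rw [dirichletForm_eq_expect]
  refine Finset.expect_le_expect fun ε _ => ?_
  have hFlip : ((n : ℝ) - 2) * ‖∑ k, ε k • x k‖
      ≤ ∑ i, ‖∑ k, Function.update ε i (-ε i) k • x k‖ :=
    calc ((n : ℝ) - 2) * ‖∑ k, ε k • x k‖
        ≤ ‖((n : ℝ) - 2) • ∑ k, ε k • x k‖ := by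
          rw [norm_smul]
          gcongr
          exact Real.le_norm_self _
      _ ≤ ∑ i, ‖∑ k, Function.update ε i (-ε i) k • x k‖ := by
          rw [← sum_sum_update_neg_smul]
          exact norm_sum_le _ _
  rw [sq, Finset.sum_sub_distrib, Finset.sum_const, Finset.card_univ, Fintype.card_fin,
    nsmul_eq_mul]
  gcongr
  linarith

/-- The Khinchine–Kahane inequality with the optimal constant; the proof is that of Latała and
Oleszkiewicz. -/
theorem expect_sq_norm_le (x : Fin n → E) :
    𝔼 ε : Fin n → ℤˣ, ‖∑ k, ε k • x k‖ ^ 2 ≤ 2 * (𝔼 ε : Fin n → ℤˣ, ‖∑ k, ε k • x k‖) ^ 2 := by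
  have hDirichlet := dirichletForm_norm_le x
  have hPoincare := poincare_inequality_two fun ε : Fin n → ℤˣ => ‖∑ k, ε k • x k‖
  have hEven (i : Fin n) : 𝔼 ε : Fin n → ℤˣ, ε i • ‖∑ k, ε k • x k‖ = 0 :=
    expect_smul_eq_zero (fun ε => by simp [Units.neg_smul]) i
  simp only [hEven, ne_eq, OfNat.ofNat_ne_zero, not_false_eq_true, zero_pow,
    Finset.sum_const_zero, sub_zero] at hPoincare
  linarith

end Normed

section Inner
variable {E : Type*} [NormedAddCommGroup E] [InnerProductSpace ℝ E]

lemma expect_sq_norm_eq : ∀ {n : ℕ} (x : Fin n → E),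
    𝔼 ε : Fin n → ℤˣ, ‖∑ k, ε k • x k‖ ^ 2 = ∑ k, ‖x k‖ ^ 2
  | 0, x => by simp
  | n + 1, x => by
    rw [expect_signs_succ, Fin.sum_univ_succ, ← expect_sq_norm_eq fun k => x k.succ,
      ← Fintype.expect_const (ι := Fin n → ℤˣ) (‖x 0‖ ^ 2), ← Finset.expect_add_distrib]
    refine Finset.expect_congr rfl fun ε _ => ?_
    have hPar := parallelogram_law_with_norm ℝ (∑ k, ε k • x k.succ) (x 0)
    simp only [Fin.sum_univ_succ, Fin.cons_zero, Fin.cons_succ, one_smul, Units.neg_smul]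
    rw [add_comm (x 0), neg_add_eq_sub, hPar]
    ring

lemma sqrt_sum_sq_norm_le (x : Fin n → E) :
    √(∑ k, ‖x k‖ ^ 2) ≤ √2 * 𝔼 ε : Fin n → ℤˣ, ‖∑ k, ε k • x k‖ := by
  refine Real.sqrt_le_iff.2 ⟨by positivity, ?_⟩
  rw [← expect_sq_norm_eq, mul_pow, Real.sq_sqrt zero_le_two]
  exact expect_sq_norm_le x

end Inner

lemma sqrt_sum_sq_expect_le {Ω κ : Type*} [Fintype Ω] [Fintype κ] (y : κ → Ω → ℝ) :
    √(∑ k, (𝔼 ω, y k ω) ^ 2) ≤ 𝔼 ω, √(∑ k, y k ω ^ 2) := by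
  set A := √(∑ k, (𝔼 ω, y k ω) ^ 2)
  have hA : A * A = ∑ k, (𝔼 ω, y k ω) ^ 2 :=
    Real.mul_self_sqrt (Finset.sum_nonneg fun _ _ => sq_nonneg _)
  rcases (show 0 ≤ A from Real.sqrt_nonneg _).eq_or_lt with hA₀ | hA₀
  · rw [← hA₀]
    exact Finset.expect_nonneg fun _ _ => Real.sqrt_nonneg _
  refine le_of_mul_le_mul_left ?_ hA₀
  calc A * A = 𝔼 ω, ∑ k, (𝔼 ω', y k ω') * y k ω := by
        rw [hA, Finset.expect_sum_comm]
        exact Finset.sum_congr rfl fun k _ => by rw [← Finset.mul_expect, sq]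
    _ ≤ 𝔼 ω, A * √(∑ k, y k ω ^ 2) :=
        Finset.expect_le_expect fun ω _ => Real.sum_mul_le_sqrt_mul_sqrt _ _ _
    _ = A * 𝔼 ω, √(∑ k, y k ω ^ 2) := by rw [Finset.mul_expect]

lemma sqrt_sum_sq_norm_le_expect_chaos {E : Type*} [NormedAddCommGroup E] [InnerProductSpace ℝ E] :
    ∀ {d : ℕ} (c : (Fin d → Fin n) → E), √(∑ j, ‖c j‖ ^ 2)
      ≤ √2 ^ d * 𝔼 ε : Fin d → Fin n → ℤˣ, ‖∑ j, (∏ l, ε l (j l)) • c j‖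
  | 0, c => by simp
  | d + 1, c => by
    set y : Fin n → (Fin d → Fin n → ℤˣ) → E := fun k ε =>
      ∑ j : Fin d → Fin n, (∏ l, ε l (j l)) • c (Fin.cons k j) with hy
    have hChaos (a : Fin n → ℤˣ) (ε : Fin d → Fin n → ℤˣ) :
        ∑ j, (∏ l, (Fin.cons a ε : Fin (d + 1) → Fin n → ℤˣ) l (j l)) • c j
          = ∑ k, a k • y k ε := by
      simp only [hy, sum_pi_cons, Fin.prod_univ_succ, Fin.cons_zero, Fin.cons_succ, mul_smul,
        Finset.smul_sum]
    calc √(∑ j, ‖c j‖ ^ 2)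
        = √(∑ k, √(∑ j : Fin d → Fin n, ‖c (Fin.cons k j)‖ ^ 2) ^ 2) := by
          simp only [sum_pi_cons, Real.sq_sqrt (Finset.sum_nonneg fun _ _ => sq_nonneg ‖_‖)]
      _ ≤ √(∑ k, (√2 ^ d * 𝔼 ε, ‖y k ε‖) ^ 2) := by
          gcongr with k
          exact sqrt_sum_sq_norm_le_expect_chaos fun j => c (Fin.cons k j)
      _ = √2 ^ d * √(∑ k, (𝔼 ε, ‖y k ε‖) ^ 2) := by
          rw [Finset.sum_congr rfl fun k _ => mul_pow (√2 ^ d) (𝔼 ε, ‖y k ε‖) 2,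
            ← Finset.mul_sum, Real.sqrt_mul (sq_nonneg _), Real.sqrt_sq (by positivity)]
      _ ≤ √2 ^ d * 𝔼 ε, √(∑ k, ‖y k ε‖ ^ 2) := by
          gcongr
          exact sqrt_sum_sq_expect_le _
      _ ≤ √2 ^ d * 𝔼 ε, √2 * 𝔼 a : Fin n → ℤˣ, ‖∑ k, a k • y k ε‖ := by
          gcongr with ε
          exact sqrt_sum_sq_norm_le _
      _ = √2 ^ (d + 1) * 𝔼 ε : Fin (d + 1) → Fin n → ℤˣ, ‖∑ j, (∏ l, ε l (j l)) • c j‖ := by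
          rw [expect_pi_cons, Finset.expect_comm]
          simp only [hChaos]
          rw [← Finset.mul_expect, pow_succ, mul_assoc]

end Khinchine

section Polydisc

variable {𝕂 : Type*} [RCLike 𝕂] {d n : ℕ} {b : (Fin d → Fin n) → 𝕂} {C : ℝ}

lemma sum_norm_sum_fiber_le
    (hb : ∀ x : Fin d → Fin n → 𝕂, (∀ l k, ‖x l k‖ ≤ 1) → ‖∑ j, (∏ l, x l (j l)) * b j‖ ≤ C)
    (i : Fin d) :
    ∑ k, ‖∑ j with j i = k, b j‖ ≤ C := by
  choose φ hφ_norm hφ using fun k => RCLike.exists_norm_eq_mul_self (∑ j with j i = k, b j)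
  have hTest : ∑ j, (∏ l, if l = i then φ (j l) else 1) * b j
      = ((∑ k, ‖∑ j with j i = k, b j‖ : ℝ) : 𝕂) := by
    rw [RCLike.ofReal_sum, ← Finset.sum_fiberwise Finset.univ (fun j => j i)]
    refine Finset.sum_congr rfl fun k _ => ?_
    rw [hφ, Finset.mul_sum]
    refine Finset.sum_congr rfl fun j hj => ?_
    rw [Finset.prod_ite_eq' Finset.univ i, if_pos (Finset.mem_univ _), (Finset.mem_filter.1 hj).2]
  have hBound := hb (fun l k => if l = i then φ k else 1) fun l k => by
    split_ifs
    exacts [(hφ_norm k).le, norm_one.le]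
  rwa [hTest, RCLike.norm_ofReal, abs_of_nonneg (by positivity)] at hBound

/-- The mixed `(ℓ₁, ℓ₂)` Littlewood inequality. -/
theorem sum_sqrt_sum_fiber_le
    (hb : ∀ x : Fin d → Fin n → 𝕂, (∀ l k, ‖x l k‖ ≤ 1) → ‖∑ j, (∏ l, x l (j l)) * b j‖ ≤ C)
    (i : Fin d) :
    ∑ k, √(∑ j with j i = k, ‖b j‖ ^ 2) ≤ √2 ^ d * C := by
  have hKhinchine (k : Fin n) : √(∑ j with j i = k, ‖b j‖ ^ 2) ≤
      √2 ^ d * 𝔼 ε : Fin d → Fin n → ℤˣ, ‖∑ j with j i = k, (∏ l, ε l (j l)) • b j‖ := by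
    have hFiber := sqrt_sum_sq_norm_le_expect_chaos fun j => if j i = k then b j else 0
    simpa only [apply_ite, smul_zero, norm_zero, ne_eq, OfNat.ofNat_ne_zero, not_false_eq_true,
      zero_pow, Finset.sum_filter, ite_pow] using hFiber
  have hSigns (ε : Fin d → Fin n → ℤˣ) :
      ∑ k, ‖∑ j with j i = k, (∏ l, ε l (j l)) • b j‖ ≤ C := by
    refine sum_norm_sum_fiber_le (fun x hx => ?_) i
    have hTwist := hb (fun l k => ε l k • x l k) fun l k => by
      simpa only [norm_units_zsmul] using hx l k
    simpa only [Finset.prod_smul, smul_mul_assoc, mul_smul_comm] using hTwist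
  calc ∑ k, √(∑ j with j i = k, ‖b j‖ ^ 2)
      ≤ ∑ k, √2 ^ d * 𝔼 ε : Fin d → Fin n → ℤˣ, ‖∑ j with j i = k, (∏ l, ε l (j l)) • b j‖ :=
        Finset.sum_le_sum fun k _ => hKhinchine k
    _ = √2 ^ d * 𝔼 ε : Fin d → Fin n → ℤˣ, ∑ k, ‖∑ j with j i = k, (∏ l, ε l (j l)) • b j‖ := by
        rw [Finset.expect_sum_comm, Finset.mul_sum]
    _ ≤ √2 ^ d * C := by
        gcongr
        exact Finset.expect_le Finset.univ_nonempty fun ε _ => hSigns ε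

end Polydisc

section Weights

lemma exists_le_sum_eq_one {ι : Type*} [Fintype ι] [Nonempty ι] {c : ι → ℝ} (hc : ∑ l, c l ≤ 1) :
    ∃ θ : ι → ℝ, (∀ l, c l ≤ θ l) ∧ ∑ l, θ l = 1 := by
  have hCard : (0 : ℝ) < Fintype.card ι := by exact_mod_cast Fintype.card_pos
  refine ⟨fun l => c l + (1 - ∑ l, c l) / Fintype.card ι, fun l => ?_, ?_⟩
  · exact le_add_of_nonneg_right (div_nonneg (sub_nonneg.2 hc) hCard.le)
  · rw [Finset.sum_add_distrib, Finset.sum_const, Finset.card_univ, nsmul_eq_mul,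
      mul_div_cancel₀ _ hCard.ne', add_sub_cancel]

/-- The density of a measure of total mass at most one on a finite type. Smaller mass is allowed so
that the quotient `f / ∑ f` of a nonnegative `f` qualifies even if `f = 0`. -/
structure IsSubprobability {κ : Type*} [Fintype κ] (w : κ → ℝ) : Prop where
  nonneg : ∀ k, 0 ≤ w k
  sum_le_one : ∑ k, w k ≤ 1

namespace IsSubprobability

variable {κ ι : Type*} [Fintype κ] [Fintype ι]

lemma le_one {w : κ → ℝ} (hw : IsSubprobability w) (k : κ) : w k ≤ 1 :=
  (Finset.single_le_sum (fun k _ => hw.nonneg k) (Finset.mem_univ k)).trans hw.sum_le_one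

lemma div_sum {f : κ → ℝ} (hf : ∀ k, 0 ≤ f k) : IsSubprobability fun k => f k / ∑ k', f k' where
  nonneg k := div_nonneg (hf k) (Finset.sum_nonneg fun k _ => hf k)
  sum_le_one := by
    rw [← Finset.sum_div]
    exact div_self_le_one _

lemma mixture {μ : ι → ℝ} {w : ι → κ → ℝ} (hμ : IsSubprobability μ)
    (hw : ∀ i, IsSubprobability (w i)) : IsSubprobability fun k => ∑ i, μ i * w i k where
  nonneg k := Finset.sum_nonneg fun i _ => mul_nonneg (hμ.nonneg i) ((hw i).nonneg k)
  sum_le_one := by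
    rw [Finset.sum_comm]
    simp only [← Finset.mul_sum]
    exact (Finset.sum_le_sum fun i _ =>
      mul_le_of_le_one_right (hμ.nonneg i) (hw i).sum_le_one).trans hμ.sum_le_one

lemma sum_rpow_mul_rpow_le_one {w u : κ → ℝ} (hw : IsSubprobability w) (hu : IsSubprobability u)
    {x y : ℝ} (hx : 0 ≤ x) (hy : 0 ≤ y) (hxy : 1 ≤ x + y) : ∑ k, w k ^ x * u k ^ y ≤ 1 := by
  set t := x + y
  have ht : 0 < t := zero_lt_one.trans_le hxy
  have hTerm (k : κ) : w k ^ x * u k ^ y ≤ x / t * w k + y / t * u k := by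
    have hw₀ := hw.nonneg k
    have hu₀ := hu.nonneg k
    calc w k ^ x * u k ^ y = (w k ^ (x / t) * u k ^ (y / t)) ^ t := by
          rw [Real.mul_rpow (by positivity) (by positivity), ← Real.rpow_mul hw₀,
            ← Real.rpow_mul hu₀, div_mul_cancel₀ _ ht.ne', div_mul_cancel₀ _ ht.ne']
      _ ≤ w k ^ (x / t) * u k ^ (y / t) := by
          refine Real.rpow_le_self_of_le_one (by positivity) (mul_le_one₀ ?_ (by positivity) ?_) hxy
          · exact Real.rpow_le_one hw₀ (hw.le_one k) (by positivity)
          · exact Real.rpow_le_one hu₀ (hu.le_one k) (by positivity)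
      _ ≤ x / t * w k + y / t * u k :=
          Real.geom_mean_le_arith_mean2_weighted (by positivity) (by positivity) hw₀ hu₀
            (by rw [← add_div, div_self ht.ne'])
  calc ∑ k, w k ^ x * u k ^ y ≤ ∑ k, (x / t * w k + y / t * u k) :=
        Finset.sum_le_sum fun k _ => hTerm k
    _ = x / t * ∑ k, w k + y / t * ∑ k, u k := by
        rw [Finset.sum_add_distrib, Finset.mul_sum, Finset.mul_sum]
    _ ≤ x / t * 1 + y / t * 1 := by
        gcongr
        exacts [hw.sum_le_one, hu.sum_le_one]
    _ = 1 := by rw [mul_one, mul_one, ← add_div, div_self ht.ne']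

lemma norm_toLp_sqrt_le_one {𝕂 : Type*} [RCLike 𝕂] {w u : κ → ℝ} (hw : IsSubprobability w)
    (hu : IsSubprobability u) {p : ℝ≥0} [hp : Fact ((1 : ℝ≥0∞) ≤ p)] {α θ : ℝ} (hα : 0 ≤ α)
    (hθ : 0 ≤ θ) (hαθ : 2 / p ≤ α + θ) :
    ‖(WithLp.toLp p fun k => ((√(w k ^ α * u k ^ θ) : ℝ) : 𝕂) : PiLp p fun _ : κ => 𝕂)‖ ≤ 1 := by
  have hp₀ : (0 : ℝ) < p := zero_lt_one.trans_le (by exact_mod_cast hp.out)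
  have hTerm (k : κ) : ‖((√(w k ^ α * u k ^ θ) : ℝ) : 𝕂)‖ ^ (p : ℝ)
      = w k ^ (α * p / 2) * u k ^ (θ * p / 2) := by
    have hwk := Real.rpow_nonneg (hw.nonneg k) α
    have huk := Real.rpow_nonneg (hu.nonneg k) θ
    rw [RCLike.norm_ofReal, abs_of_nonneg (Real.sqrt_nonneg _), Real.sqrt_eq_rpow,
      ← Real.rpow_mul (mul_nonneg hwk huk), Real.mul_rpow hwk huk, ← Real.rpow_mul (hw.nonneg k),
      ← Real.rpow_mul (hu.nonneg k), one_div_mul_eq_div, mul_div_assoc, mul_div_assoc]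
  rw [PiLp.norm_eq_sum (by simpa using hp₀)]
  simp only [ENNReal.coe_toReal, hTerm]
  refine Real.rpow_le_one (Finset.sum_nonneg fun k _ => ?_)
    (hw.sum_rpow_mul_rpow_le_one hu (by positivity) (by positivity) ?_) (by positivity)
  · exact mul_nonneg (Real.rpow_nonneg (hw.nonneg k) _) (Real.rpow_nonneg (hu.nonneg k) _)
  · rw [div_le_iff₀ hp₀] at hαθ
    linarith

end IsSubprobability

end Weights

section MixedNorm

variable {n : ℕ}

lemma mixedNorm_nonneg : ∀ {d : ℕ} (s : Fin d → ℝ) {f : (Fin d → Fin n) → ℝ},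
    (∀ j, 0 ≤ f j) → 0 ≤ mixedNorm n d s f
  | 0, _, _, hf => hf _
  | _ + 1, _, _, hf =>
    Real.rpow_nonneg (Finset.sum_nonneg fun _ _ =>
      Real.rpow_nonneg (mixedNorm_nonneg _ fun _ => hf _) _) _

-- The extremal case of Hölder's inequality for `s / 2` and its conjugate exponent.
lemma sq_sum_rpow_eq {κ : Type*} [Fintype κ] {ρ : κ → ℝ} (hρ : ∀ k, 0 ≤ ρ k) {s : ℝ} (hs : 0 < s) :
    ((∑ k, ρ k ^ s) ^ (1 / s)) ^ 2
      = ∑ k, ρ k ^ 2 * (ρ k ^ s / ∑ k', ρ k' ^ s) ^ (1 - 2 / s) := by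
  set S := ∑ k, ρ k ^ s with hS
  have hρs (k : κ) : 0 ≤ ρ k ^ s := Real.rpow_nonneg (hρ k) s
  have hS_nonneg : 0 ≤ S := Finset.sum_nonneg fun k _ => hρs k
  rcases hS_nonneg.eq_or_lt with hS₀ | hS₀
  · have hρ_zero (k : κ) : ρ k = 0 :=
      (Real.rpow_eq_zero (hρ k) hs.ne').1
        ((Finset.sum_eq_zero_iff_of_nonneg fun k _ => hρs k).1 hS₀.symm k (Finset.mem_univ k))
    rw [← hS₀, Real.zero_rpow (by positivity)]
    simp [hρ_zero]
  have hTerm (k : κ) : ρ k ^ 2 * (ρ k ^ s / S) ^ (1 - 2 / s) = ρ k ^ s * (S ^ (2 / s) / S) := by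
    rcases (hρ k).eq_or_lt with hk | hk
    · simp [← hk, hs.ne']
    rw [Real.div_rpow (hρs k) hS₀.le, ← Real.rpow_mul hk.le, mul_one_sub, mul_div_cancel₀ _ hs.ne',
      Real.rpow_sub hk, Real.rpow_sub hS₀, Real.rpow_one, Real.rpow_two]
    field_simp
  rw [Finset.sum_congr rfl fun k _ => hTerm k, ← Finset.sum_mul, ← hS, mul_div_cancel₀ _ hS₀.ne',
    ← Real.rpow_mul_natCast hS₀.le, one_div_mul_eq_div, Nat.cast_ofNat]

lemma sum_two_div_succ_sub_castSucc {d : ℕ} (s : Fin (d + 1) → ℝ) :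
    ∑ l, (2 / s (Fin.succ l) - 2 / s (Fin.castSucc l)) = 2 / s (Fin.last d) - 2 / s 0 := by
  have hSucc := Fin.sum_univ_succ fun i => 2 / s i
  have hCastSucc := Fin.sum_univ_castSucc fun i => 2 / s i
  rw [Finset.sum_sub_distrib]
  linarith

lemma two_div_succ_sub_castSucc_nonneg {d : ℕ} {s : Fin (d + 1) → ℝ} (hs : Antitone s)
    (hs_pos : 0 < s (Fin.last d)) (l : Fin d) :
    0 ≤ 2 / s (Fin.succ l) - 2 / s (Fin.castSucc l) :=
  sub_nonneg.2 <| div_le_div_of_nonneg_left zero_le_two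
    (hs_pos.trans_le (hs (Fin.le_last _))) (hs l.castSucc_le_succ)

lemma rpow_add_sum_mul_prod_rpow_le {ι κ : Type*} [Fintype ι] [Fintype κ] {μ : κ → ℝ}
    {z : κ → ι → ℝ} (hμ : ∀ k, 0 ≤ μ k) (hz : ∀ k l, 0 ≤ z k l) {a : ℝ} {α : ι → ℝ} (ha : 0 ≤ a)
    (hα : ∀ l, 0 ≤ α l) (k : κ) :
    μ k ^ (a + ∑ l, α l) * ∏ l, z k l ^ α l ≤ μ k ^ a * ∏ l, (∑ k', μ k' * z k' l) ^ α l := by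
  have hμz (k : κ) (l : ι) : 0 ≤ μ k * z k l := mul_nonneg (hμ k) (hz k l)
  rw [Real.rpow_add_of_nonneg (hμ k) ha (Finset.sum_nonneg fun l _ => hα l),
    Real.rpow_sum_of_nonneg (hμ k) fun l _ => hα l, mul_assoc, ← Finset.prod_mul_distrib]
  simp only [← Real.mul_rpow (hμ k) (hz k _)]
  gcongr with l
  · exact Real.rpow_nonneg (hμ k) a
  · exact fun l _ => Real.rpow_nonneg (hμz k l) _
  · exact hμz k l
  · exact hα l
  · exact Finset.single_le_sum (f := fun k' => μ k' * z k' l) (fun k' _ => hμz k' l)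
      (Finset.mem_univ k)

lemma sum_mul_rpow_le_sum_sum_mixture {ι κ σ : Type*} [Fintype ι] [DecidableEq ι] [Fintype κ]
    [Fintype σ] {R μ : κ → ℝ} {z : κ → ι → σ → ℝ} {g : κ → (ι → σ) → ℝ} {a : ℝ} {α : ι → ℝ}
    (hμ : ∀ k, 0 ≤ μ k) (hz : ∀ k l i, 0 ≤ z k l i) (hg : ∀ k j, 0 ≤ g k j) (ha : 0 ≤ a)
    (hα : ∀ l, 0 ≤ α l) (hR : ∀ k, R k ≤ ∑ j, g k j * ∏ l, z k l (j l) ^ α l) :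
    ∑ k, R k * μ k ^ (a + ∑ l, α l)
      ≤ ∑ k, ∑ j : ι → σ, g k j * (μ k ^ a * ∏ l, (∑ k', μ k' * z k' l (j l)) ^ α l) := by
  refine Finset.sum_le_sum fun k _ => ?_
  calc R k * μ k ^ (a + ∑ l, α l)
      ≤ (∑ j, g k j * ∏ l, z k l (j l) ^ α l) * μ k ^ (a + ∑ l, α l) :=
        mul_le_mul_of_nonneg_right (hR k) (Real.rpow_nonneg (hμ k) _)
    _ = ∑ j, g k j * (μ k ^ (a + ∑ l, α l) * ∏ l, z k l (j l) ^ α l) := by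
        rw [Finset.sum_mul]
        exact Finset.sum_congr rfl fun j _ => by ring
    _ ≤ ∑ j, g k j * (μ k ^ a * ∏ l, (∑ k', μ k' * z k' l (j l)) ^ α l) :=
        Finset.sum_le_sum fun j _ => mul_le_mul_of_nonneg_left
          (rpow_add_sum_mul_prod_rpow_le hμ (fun k l => hz k l (j l)) ha hα k) (hg k j)

lemma exists_weights_sq_mixedNorm_le : ∀ {d : ℕ} {s : Fin (d + 1) → ℝ} (_ : Antitone s)
    (_ : s (Fin.last d) = 2) {f : (Fin d → Fin n) → ℝ} (_ : ∀ j, 0 ≤ f j),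
    ∃ w : Fin d → Fin n → ℝ, (∀ l, IsSubprobability (w l)) ∧
      mixedNorm n d (fun i => s i.castSucc) f ^ 2
        ≤ ∑ j, f j ^ 2 * ∏ l, w l (j l) ^ (2 / s l.succ - 2 / s l.castSucc)
  | 0, s, _, _, f, _ => ⟨Fin.elim0, fun l => l.elim0, by
      simp [mixedNorm, Subsingleton.elim (default : Fin 0 → Fin n) Fin.elim0]⟩
  | d + 1, s, hs, hs_last, f, hf => by
    choose z hz hz_le using fun k : Fin n => exists_weights_sq_mixedNorm_le
      (s := fun i => s i.succ) (fun _ _ h => hs (Fin.succ_le_succ_iff.2 h)) hs_last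
      (f := fun j => f (Fin.cons k j)) fun j => hf _
    set ρ : Fin n → ℝ := fun k =>
      mixedNorm n d (fun i => s i.succ.castSucc) fun j => f (Fin.cons k j)
    have hρ (k : Fin n) : 0 ≤ ρ k := mixedNorm_nonneg _ fun j => hf _
    have hs_pos : 0 < s (Fin.last (d + 1)) := by rw [hs_last]; exact two_pos
    set α : Fin (d + 1) → ℝ := fun l => 2 / s l.succ - 2 / s l.castSucc
    have hα (l : Fin (d + 1)) : 0 ≤ α l := two_div_succ_sub_castSucc_nonneg hs hs_pos l
    have hα_sum : 1 - 2 / s 0 = α 0 + ∑ l : Fin d, α l.succ := by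
      rw [← Fin.sum_univ_succ, sum_two_div_succ_sub_castSucc, hs_last, div_self two_ne_zero]
    set μ : Fin n → ℝ := fun k => ρ k ^ s 0 / ∑ k', ρ k' ^ s 0
    have hμ : IsSubprobability μ := .div_sum fun k => Real.rpow_nonneg (hρ k) _
    refine ⟨Fin.cons μ fun l k' => ∑ k, μ k * z k l k',
      Fin.cases hμ fun l => hμ.mixture fun k => hz k l, ?_⟩
    calc mixedNorm n (d + 1) (fun i => s i.castSucc) f ^ 2
        = ∑ k, ρ k ^ 2 * μ k ^ (1 - 2 / s 0) :=
          sq_sum_rpow_eq hρ (hs_pos.trans_le (hs (Fin.zero_le _)))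
      _ ≤ ∑ k, ∑ j : Fin d → Fin n, f (Fin.cons k j) ^ 2 *
            (μ k ^ α 0 * ∏ l, (∑ k', μ k' * z k' l (j l)) ^ α l.succ) := by
          rw [hα_sum]
          exact sum_mul_rpow_le_sum_sum_mixture hμ.nonneg (fun k l => (hz k l).nonneg)
            (fun _ _ => sq_nonneg _) (hα 0) (fun l => hα l.succ) hz_le
      _ = ∑ j, f j ^ 2 * ∏ l, (Fin.cons μ fun l k' => ∑ k, μ k * z k l k' :
            Fin (d + 1) → Fin n → ℝ) l (j l) ^ α l := by
          simp only [sum_pi_cons, Fin.prod_univ_succ, Fin.cons_zero, Fin.cons_succ]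

end MixedNorm

section Marginals

variable {ι : Type*} [Fintype ι]

lemma one_le_sqrt_prod_rpow_mul_sum {u θ : ι → ℝ} (hu : ∀ i, 0 < u i) (hθ : ∀ i, 0 ≤ θ i)
    (hθ_sum : ∑ i, θ i = 1) : 1 ≤ √(∏ i, u i ^ θ i) * ∑ i, θ i * (√(u i))⁻¹ := by
  have hProd : 0 < ∏ i, u i ^ θ i := Finset.prod_pos fun i _ => Real.rpow_pos_of_pos (hu i) _
  have hGeom : (√(∏ i, u i ^ θ i))⁻¹ = ∏ i, (√(u i))⁻¹ ^ θ i := by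
    rw [Real.sqrt_eq_rpow, ← Real.finsetProd_rpow _ _ fun i _ => Real.rpow_nonneg (hu i).le _,
      ← Finset.prod_inv_distrib]
    refine Finset.prod_congr rfl fun i _ => ?_
    rw [Real.inv_rpow (Real.sqrt_nonneg _), Real.sqrt_eq_rpow, ← Real.rpow_mul (hu i).le,
      ← Real.rpow_mul (hu i).le, mul_comm]
  rw [← inv_le_iff_one_le_mul₀' (Real.sqrt_pos.2 hProd), hGeom]
  exact Real.geom_mean_le_arith_mean_weighted _ θ _ (fun i _ => hθ i) hθ_sum
    fun i _ => by positivity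

lemma sum_mul_sqrt_le {σ : Type*} (t : Finset σ) {β P : σ → ℝ} (hβ : ∀ j, 0 ≤ β j)
    (hP : ∀ j, 0 ≤ P j) :
    (∑ j ∈ t, β j * √(P j)) * (√(∑ j ∈ t, β j))⁻¹ ≤ √(∑ j ∈ t, β j * P j) := by
  refine mul_inv_le_of_le_mul₀ (Real.sqrt_nonneg _) (Real.sqrt_nonneg _) ?_
  calc ∑ j ∈ t, β j * √(P j) = ∑ j ∈ t, √(β j * P j) * √(β j) := by
        refine Finset.sum_congr rfl fun j _ => ?_
        rw [Real.sqrt_mul (hβ j), mul_right_comm, Real.mul_self_sqrt (hβ j)]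
    _ ≤ √(∑ j ∈ t, β j * P j) * √(∑ j ∈ t, β j) :=
        Real.sum_sqrt_mul_sqrt_le t (fun j => mul_nonneg (hβ j) (hP j)) hβ

variable {κ : Type*} [DecidableEq ι] [Fintype κ] [DecidableEq κ]

/-- The `i`-th marginal of a density on a finite product. -/
def marginal (β : (ι → κ) → ℝ) (i : ι) (k : κ) : ℝ := ∑ j with j i = k, β j

lemma marginal_nonneg {β : (ι → κ) → ℝ} (hβ : ∀ j, 0 ≤ β j) (i : ι) (k : κ) :
    0 ≤ marginal β i k :=
  Finset.sum_nonneg fun j _ => hβ j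

lemma le_marginal {β : (ι → κ) → ℝ} (hβ : ∀ j, 0 ≤ β j) (i : ι) (j : ι → κ) :
    β j ≤ marginal β i (j i) :=
  Finset.single_le_sum (fun j _ => hβ j) (by simp)

lemma IsSubprobability.marginal {β : (ι → κ) → ℝ} (hβ : IsSubprobability β) (i : ι) :
    IsSubprobability (marginal β i) where
  nonneg := marginal_nonneg hβ.nonneg i
  sum_le_one := (Finset.sum_fiberwise Finset.univ (fun j : ι → κ => j i) β).trans_le hβ.sum_le_one

lemma sum_le_sum_mul_sum_sqrt_marginal {β : (ι → κ) → ℝ} (hβ : ∀ j, 0 ≤ β j) {θ : ι → ℝ}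
    (hθ : ∀ i, 0 ≤ θ i) (hθ_sum : ∑ i, θ i = 1) :
    ∑ j, β j ≤ ∑ i, θ i * ∑ k, √(∑ j with j i = k, β j * ∏ l, marginal β l (j l) ^ θ l) := by
  set P : (ι → κ) → ℝ := fun j => ∏ l, marginal β l (j l) ^ θ l
  have hP (j : ι → κ) : 0 ≤ P j :=
    Finset.prod_nonneg fun l _ => Real.rpow_nonneg (marginal_nonneg hβ l _) _
  have hPointwise (j : ι → κ) :
      β j ≤ β j * (√(P j) * ∑ i, θ i * (√(marginal β i (j i)))⁻¹) := by
    rcases (hβ j).eq_or_lt with hj | hj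
    · simp [← hj]
    · exact le_mul_of_one_le_right hj.le <| one_le_sqrt_prod_rpow_mul_sum
        (fun i => hj.trans_le (le_marginal hβ i j)) hθ hθ_sum
  calc ∑ j, β j ≤ ∑ j, β j * (√(P j) * ∑ i, θ i * (√(marginal β i (j i)))⁻¹) :=
        Finset.sum_le_sum fun j _ => hPointwise j
    _ = ∑ i, θ i * ∑ j, β j * √(P j) * (√(marginal β i (j i)))⁻¹ := by
        simp only [Finset.mul_sum]
        rw [Finset.sum_comm]
        refine Finset.sum_congr rfl fun i _ => Finset.sum_congr rfl fun j _ => ?_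
        ring
    _ = ∑ i, θ i * ∑ k, (∑ j with j i = k, β j * √(P j)) * (√(marginal β i k))⁻¹ := by
        refine Finset.sum_congr rfl fun i _ => congrArg _ ?_
        rw [← Finset.sum_fiberwise Finset.univ fun j : ι → κ => j i]
        refine Finset.sum_congr rfl fun k _ => ?_
        rw [Finset.sum_mul]
        exact Finset.sum_congr rfl fun j hj => by rw [(Finset.mem_filter.1 hj).2]
    _ ≤ ∑ i, θ i * ∑ k, √(∑ j with j i = k, β j * P j) := by
        gcongr with i _ k
        · exact hθ i
        · exact sum_mul_sqrt_le _ hβ hP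

lemma exists_weights_sqrt_sum_le {b : (ι → κ) → ℝ} (hb : ∀ j, 0 ≤ b j) {θ : ι → ℝ}
    (hθ : ∀ i, 0 ≤ θ i) (hθ_sum : ∑ i, θ i = 1) :
    ∃ u : ι → κ → ℝ, (∀ i, IsSubprobability (u i)) ∧
      √(∑ j, b j) ≤ ∑ i, θ i * ∑ k, √(∑ j with j i = k, b j * ∏ l, u l (j l) ^ θ l) := by
  set B := ∑ j, b j with hB_def
  set β : (ι → κ) → ℝ := fun j => b j / B
  have hβ : IsSubprobability β := .div_sum hb
  refine ⟨marginal β, hβ.marginal, ?_⟩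
  have hB_nonneg : 0 ≤ B := Finset.sum_nonneg fun j _ => hb j
  rcases hB_nonneg.eq_or_lt with hB | hB
  · rw [← hB, Real.sqrt_zero]
    exact Finset.sum_nonneg fun i _ => mul_nonneg (hθ i) (by positivity)
  have hb_eq (j : ι → κ) : b j = B * β j := (mul_div_cancel₀ _ hB.ne').symm
  calc √B = √B * ∑ j, β j := by rw [← Finset.sum_div, ← hB_def, div_self hB.ne', mul_one]
    _ ≤ √B * ∑ i, θ i * ∑ k, √(∑ j with j i = k, β j * ∏ l, marginal β l (j l) ^ θ l) := by
        gcongr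
        exact sum_le_sum_mul_sum_sqrt_marginal hβ.nonneg hθ hθ_sum
    _ = ∑ i, θ i * ∑ k, √(∑ j with j i = k, b j * ∏ l, marginal β l (j l) ^ θ l) := by
        simp only [Finset.mul_sum]
        refine Finset.sum_congr rfl fun i _ => Finset.sum_congr rfl fun k _ => ?_
        simp only [hb_eq, mul_assoc B]
        rw [← Finset.mul_sum, Real.sqrt_mul hB_nonneg, mul_left_comm]

end Marginals

section MultilinearForm

variable {𝕂 : Type*} [RCLike 𝕂]

lemma norm_toLp_mul_le {κ : Type*} [Fintype κ] {p : ℝ≥0} [hp : Fact ((1 : ℝ≥0∞) ≤ p)]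
    {x v : κ → 𝕂} (hx : ∀ k, ‖x k‖ ≤ 1) :
    ‖(WithLp.toLp p fun k => x k * v k : PiLp p fun _ : κ => 𝕂)‖
      ≤ ‖(WithLp.toLp p v : PiLp p fun _ : κ => 𝕂)‖ := by
  have hp_pos : 0 < (p : ℝ≥0∞).toReal :=
    ENNReal.toReal_pos (one_pos.trans_le hp.out).ne' ENNReal.coe_ne_top
  rw [PiLp.norm_eq_sum hp_pos, PiLp.norm_eq_sum hp_pos]
  gcongr with k
  rw [norm_mul]
  exact mul_le_of_le_one_left (norm_nonneg _) (hx k)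

variable {d n : ℕ} {p : Fin d → ℝ≥0}

lemma map_toLp_eq_sum (A : ContinuousMultilinearMap 𝕂 (fun l => PiLp (p l) fun _ : Fin n => 𝕂) 𝕂)
    (x : Fin d → Fin n → 𝕂) :
    A (fun l => WithLp.toLp (p l) (x l))
      = ∑ j : Fin d → Fin n, (∏ l, x l (j l)) * A fun l => PiLp.single (p l) (j l) 1 := by
  have hDecomp (l : Fin d) : (WithLp.toLp (p l) (x l) : PiLp (p l) fun _ : Fin n => 𝕂)
      = ∑ k, x l k • PiLp.single (p l) k 1 := by
    ext i
    simp [Pi.single_apply]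
  simp only [hDecomp, A.map_sum, A.map_smul_univ, smul_eq_mul]

variable [∀ l, Fact ((1 : ℝ≥0∞) ≤ p l)]

lemma sum_sqrt_sum_fiber_map_single_le
    (A : ContinuousMultilinearMap 𝕂 (fun l => PiLp (p l) fun _ : Fin n => 𝕂) 𝕂)
    {W : Fin d → Fin n → ℝ} (hW : ∀ l k, 0 ≤ W l k)
    (hW_norm : ∀ l, ‖(WithLp.toLp (p l) fun k => ((√(W l k) : ℝ) : 𝕂) :
      PiLp (p l) fun _ : Fin n => 𝕂)‖ ≤ 1) (i : Fin d) :
    ∑ k, √(∑ j : Fin d → Fin n with j i = k,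
      ‖A fun l => PiLp.single (p l) (j l) 1‖ ^ 2 * ∏ l, W l (j l))
      ≤ √2 ^ d * ‖A‖ := by
  have hTest (x : Fin d → Fin n → 𝕂) (hx : ∀ l k, ‖x l k‖ ≤ 1) :
      ‖∑ j : Fin d → Fin n, (∏ l, x l (j l)) *
        ((∏ l, ((√(W l (j l)) : ℝ) : 𝕂)) * A fun l => PiLp.single (p l) (j l) 1)‖ ≤ ‖A‖ := by
    simp only [← mul_assoc, ← Finset.prod_mul_distrib]
    rw [← map_toLp_eq_sum A fun l k => x l k * ((√(W l k) : ℝ) : 𝕂)]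
    exact A.unit_le_opNorm <| (pi_norm_le_iff_of_nonneg zero_le_one).2 fun l =>
      (norm_toLp_mul_le (hx l)).trans (hW_norm l)
  have hNorm (j : Fin d → Fin n) :
      ‖(∏ l, ((√(W l (j l)) : ℝ) : 𝕂)) * A fun l => PiLp.single (p l) (j l) 1‖ ^ 2
        = ‖A fun l => PiLp.single (p l) (j l) 1‖ ^ 2 * ∏ l, W l (j l) := by
    rw [norm_mul, norm_prod, mul_pow, mul_comm, ← Finset.prod_pow]
    refine congrArg _ (Finset.prod_congr rfl fun l _ => ?_)
    rw [RCLike.norm_ofReal, sq_abs, Real.sq_sqrt (hW l _)]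
  simpa only [hNorm] using sum_sqrt_sum_fiber_le hTest i

theorem mixedNorm_norm_map_single_le [NeZero d]
    (A : ContinuousMultilinearMap 𝕂 (fun l => PiLp (p l) fun _ : Fin n => 𝕂) 𝕂)
    {s : Fin (d + 1) → ℝ} (hs : Antitone s) (hs_last : s (Fin.last d) = 2)
    (hsp : ∀ l : Fin d, (s l.succ)⁻¹ - (s l.castSucc)⁻¹ ≤ (p l : ℝ)⁻¹)
    (hp : ∑ l, (p l : ℝ)⁻¹ + (s 0)⁻¹ ≤ 1) :
    mixedNorm n d (fun i => s i.castSucc) (fun j => ‖A fun l => PiLp.single (p l) (j l) 1‖)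
      ≤ √2 ^ d * ‖A‖ := by
  set a : (Fin d → Fin n) → ℝ := fun j => ‖A fun l => PiLp.single (p l) (j l) 1‖
  set α : Fin d → ℝ := fun l => 2 / s l.succ - 2 / s l.castSucc
  have hα (l : Fin d) : 0 ≤ α l :=
    two_div_succ_sub_castSucc_nonneg hs (by rw [hs_last]; exact two_pos) l
  have ha (j : Fin d → Fin n) : 0 ≤ a j := norm_nonneg _
  have hα_le (l : Fin d) : α l ≤ 2 / p l := by
    linarith [hsp l, div_eq_mul_inv 2 (p l : ℝ), div_eq_mul_inv 2 (s l.succ),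
      div_eq_mul_inv 2 (s l.castSucc)]
  have hα_sum : ∑ l, (2 / (p l : ℝ) - α l) ≤ 1 := by
    simp only [α]
    rw [Finset.sum_sub_distrib, sum_two_div_succ_sub_castSucc, hs_last]
    simp only [div_eq_mul_inv (2 : ℝ), ← Finset.mul_sum]
    linarith
  obtain ⟨θ, hθ_le, hθ_sum⟩ := exists_le_sum_eq_one hα_sum
  have hθ (l : Fin d) : 0 ≤ θ l := (sub_nonneg.2 (hα_le l)).trans (hθ_le l)
  obtain ⟨w, hw, hw_le⟩ := exists_weights_sq_mixedNorm_le hs hs_last ha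
  have hwα (l : Fin d) (k : Fin n) : 0 ≤ w l k ^ α l := Real.rpow_nonneg ((hw l).nonneg k) _
  obtain ⟨u, hu, hu_le⟩ := exists_weights_sqrt_sum_le
    (b := fun j => a j ^ 2 * ∏ l, w l (j l) ^ α l)
    (fun j => mul_nonneg (sq_nonneg _) (Finset.prod_nonneg fun l _ => hwα l _)) hθ hθ_sum
  have hFiber (i : Fin d) :
      ∑ k, √(∑ j with j i = k, a j ^ 2 * (∏ l, w l (j l) ^ α l) * ∏ l, u l (j l) ^ θ l)
        ≤ √2 ^ d * ‖A‖ := by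
    simp only [mul_assoc, ← Finset.prod_mul_distrib]
    exact sum_sqrt_sum_fiber_map_single_le A (W := fun l k => w l k ^ α l * u l k ^ θ l)
      (fun l k => mul_nonneg (hwα l k) (Real.rpow_nonneg ((hu l).nonneg k) _))
      (fun l => (hw l).norm_toLp_sqrt_le_one (hu l) (hα l) (hθ l)
        (sub_le_iff_le_add'.1 (hθ_le l))) i
  calc mixedNorm n d (fun i => s i.castSucc) a
      ≤ √(∑ j, a j ^ 2 * ∏ l, w l (j l) ^ α l) := Real.le_sqrt_of_sq_le hw_le
    _ ≤ ∑ i, θ i * ∑ k, √(∑ j with j i = k, a j ^ 2 * (∏ l, w l (j l) ^ α l) *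
          ∏ l, u l (j l) ^ θ l) := hu_le
    _ ≤ ∑ i, θ i * (√2 ^ d * ‖A‖) :=
        Finset.sum_le_sum fun i _ => mul_le_mul_of_nonneg_left (hFiber i) (hθ i)
    _ = √2 ^ d * ‖A‖ := by rw [← Finset.sum_mul, hθ_sum, one_mul]

end MultilinearForm

section StepExponent

/-- The exponents `2p/(p - d), 2p/(p - d + 1), …, 2p/p` of the iterated norm, continued by `2`. -/
noncomputable def stepExponent (p : ℝ) (d i : ℕ) : ℝ := 2 * p / (p - d + min i d)

variable {p : ℝ} {d : ℕ}

lemma stepExponent_of_le {i : ℕ} (hi : i ≤ d) : stepExponent p d i = 2 * p / (p - d + i) := by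
  rw [stepExponent, min_eq_left hi]

lemma stepExponent_of_ge (hp : p ≠ 0) {i : ℕ} (hi : d ≤ i) : stepExponent p d i = 2 := by
  rw [stepExponent, min_eq_right hi, sub_add_cancel, mul_div_cancel_right₀ _ hp]

lemma stepExponent_antitone (hp : d < p) : Antitone (stepExponent p d) := fun i k hik => by
  have hp_pos : 0 < p := d.cast_nonneg.trans_lt hp
  have : 0 < p - d + (min i d : ℕ) :=
    add_pos_of_pos_of_nonneg (sub_pos.2 hp) (Nat.cast_nonneg _)
  unfold stepExponent
  gcongr

lemma inv_stepExponent_succ_sub_le (hp : 0 < p) (i : ℕ) :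
    (stepExponent p d (i + 1))⁻¹ - (stepExponent p d i)⁻¹ ≤ p⁻¹ := by
  have hMin : ((min (i + 1) d : ℕ) : ℝ) ≤ (min i d : ℕ) + 2 := by
    exact_mod_cast (by omega : min (i + 1) d ≤ min i d + 2)
  rw [stepExponent, stepExponent, inv_div, inv_div, ← sub_div, div_le_iff₀ (by positivity),
    mul_comm 2 p, inv_mul_cancel_left₀ hp.ne']
  linarith

lemma sum_inv_add_inv_stepExponent_zero_le (hp : d + 2 ≤ p) :
    ∑ _l : Fin (d + 1), p⁻¹ + (stepExponent p d 0)⁻¹ ≤ 1 := by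
  have hp_pos : 0 < p := by linarith [d.cast_nonneg (α := ℝ)]
  calc ∑ _l : Fin (d + 1), p⁻¹ + (stepExponent p d 0)⁻¹ = (d + 2 + p) / (2 * p) := by
        rw [stepExponent_of_le d.zero_le, Finset.sum_const, Finset.card_univ, Fintype.card_fin,
          nsmul_eq_mul]
        push_cast
        field_simp
        ring
    _ ≤ 1 := by
        rw [div_le_one (by positivity)]
        linarith

end StepExponent

end HardyLittlewood

open HardyLittlewood in
theorem critical_hardy_littlewood_weak_general {𝕂 : Type*} [RCLike 𝕂] {m n : ℕ} (hm : 2 ≤ m)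
    {p : ℝ≥0} [Fact ((1 : ℝ≥0∞) ≤ p)] (hp : m ≤ p)
    (T : ContinuousMultilinearMap 𝕂 (fun _ : Fin m => PiLp p fun _ : Fin n => 𝕂) 𝕂) (j₁ : Fin n) :
    mixedNorm n (m - 1) (fun i => 2 * (p : ℝ) / (p - m + ((i : ℕ) + 2)))
      (fun js => ‖T fun i : Fin m => (WithLp.equiv p (Fin n → 𝕂)).symm
        (Pi.single (if (i : ℕ) = 0 then j₁
          else js ⟨(i : ℕ) - 1, by have := i.isLt; omega⟩) 1)‖)
      ≤ (2 : ℝ) ^ (((m : ℝ) - 1) / 2) * ‖T‖ := by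
  obtain ⟨d, rfl⟩ := Nat.exists_eq_add_of_le' hm
  have hdp : (d : ℝ) + 2 ≤ p := by exact_mod_cast hp
  have hp_pos : (0 : ℝ) < p := by linarith [d.cast_nonneg (α := ℝ)]
  have hCurry : ‖T.curryLeft (PiLp.single p j₁ 1)‖ ≤ ‖T‖ := by
    rw [← T.curryLeft_norm]
    exact T.curryLeft.unit_le_opNorm _ (by simp)
  have hConst : (2 : ℝ) ^ ((((d + 2 : ℕ) : ℝ) - 1) / 2) = √2 ^ (d + 1) := by
    rw [Real.sqrt_eq_rpow, ← Real.rpow_mul_natCast zero_le_two]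
    congr 1
    push_cast
    ring
  have hExponent (i : Fin (d + 1)) :
      2 * (p : ℝ) / (p - (d + 2 : ℕ) + ((i : ℕ) + 2)) = stepExponent p d i := by
    rw [stepExponent_of_le (Nat.lt_succ_iff.1 i.isLt), Nat.cast_add, Nat.cast_ofNat]
    ring_nf
  calc _ = mixedNorm n (d + 1) (fun i => stepExponent p d i.castSucc)
        (fun j => ‖T.curryLeft (PiLp.single p j₁ 1) fun l => PiLp.single p (j l) 1‖) := by
        simp only [hExponent]
        refine congrArg _ (funext fun js => congrArg (fun x => ‖T x‖) (funext fun i => ?_))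
        refine Fin.cases ?_ (fun l => ?_) i <;> rfl
    _ ≤ √2 ^ (d + 1) * ‖T.curryLeft (PiLp.single p j₁ 1)‖ :=
        mixedNorm_norm_map_single_le _ (s := fun i => stepExponent p d i)
          (fun _ _ h => stepExponent_antitone (by linarith) h)
          (stepExponent_of_ge hp_pos.ne' (Nat.le_succ d))
          (fun l => inv_stepExponent_succ_sub_le hp_pos l)
          (sum_inv_add_inv_stepExponent_zero_le hdp)
    _ ≤ (2 : ℝ) ^ ((((d + 2 : ℕ) : ℝ) - 1) / 2) * ‖T‖ := by
        rw [hConst]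
        gcongr

/-- **Corollary of the extended inclusion theorem.**
For `m ≥ 2`, with `s_k = 2m/k` for `k = 2,…,m`, every `m`-linear form
`T : ℓ_m^n × ⋯ × ℓ_m^n → 𝕂` satisfies
`sup_{j_1} ( Σ_{j_2} ( ⋯ ( Σ_{j_m} |T(e_{j_1},…,e_{j_m})|^{s_m} )^{s_{m−1}/s_m} ⋯ )^{s_2/s_3} )^{1/s_2}
  ≤ 2^{(m−1)/2} ‖T‖`. -/
theorem critical_hardy_littlewood_weak (𝕂 : Type*) [RCLike 𝕂] (m : ℕ) (hm : 2 ≤ m)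
    (n : ℕ) (hn : 0 < n) :
    haveI : Fact ((1 : ℝ≥0∞) ≤ (m : ℝ≥0∞)) := ⟨by exact_mod_cast (by omega : 1 ≤ m)⟩
    ∀ T : ContinuousMultilinearMap 𝕂
        (fun _ : Fin m => PiLp (m : ℝ≥0∞) (fun _ : Fin n => 𝕂)) 𝕂,
      ⨆ j1 : Fin n,
        mixedNorm n (m - 1)
          (fun i => (2 * (m : ℝ)) / ((i : ℕ) + 2))
          (fun js => ‖T (fun i : Fin m =>
            (WithLp.equiv (m : ℝ≥0∞) (Fin n → 𝕂)).symm
              (Pi.single (if (i : ℕ) = 0 then j1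
                else js ⟨(i : ℕ) - 1, by have := i.isLt; omega⟩) 1))‖)
        ≤ (2 : ℝ) ^ (((m : ℝ) - 1) / 2) * ‖T‖ := by
  intro T
  have hFact : Fact ((1 : ℝ≥0∞) ≤ (m : ℝ≥0)) := ⟨by exact_mod_cast (by omega : 1 ≤ m)⟩
  have hNonempty : Nonempty (Fin n) := Fin.pos_iff_nonempty.1 hn
  refine ciSup_le fun j₁ => ?_
  have hBound := critical_hardy_littlewood_weak_general (p := m) hm le_rfl T j₁
  simp only [NNReal.coe_natCast, sub_self, zero_add] at hBound
  exact hBound
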